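/- (Existence of a null plane, Lemma 4.1.) Let G be an area metric on ℝ⁴ and suppose the endomorphism K = ω̂_G ∘ Ĝ⁻¹ of Λ²((ℝ⁴)*) admits a real Jordan chain of length two: there exist λ ∈ ℝ and Ω₁, Ω₂ ∈ Λ²((ℝ⁴)*) with Ω₁ ≠ 0, KΩ₁ = λΩ₁ and KΩ₂ = Ω₁ + λΩ₂. Then there exist linearly independent covectors θ¹, θ² ∈ (ℝ⁴)* such that every ξ in the linear span of θ¹ and θ² satisfies 𝒢(ξ,ξ,ξ,ξ) = 0. -/

import Mathlib

noncomputable section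

/-- First members of the ordered Petrov index pairs `[01],[02],[03],[12],[31],[23]`. -/
def pFst : Fin 6 → Fin 4 := ![0, 0, 0, 1, 3, 2]

/-- Second members of the ordered Petrov index pairs `[01],[02],[03],[12],[31],[23]`. -/
def pSnd : Fin 6 → Fin 4 := ![1, 2, 3, 2, 1, 3]

/-- The Petrov matrix of a rank-4 covariant tensor on `ℝ⁴`: the symmetric `6 × 6` matrix
of components `G_{abcd}` indexed by the ordered pairs `[01],[02],[03],[12],[31],[23]`. -/
def petrov (G : Fin 4 → Fin 4 → Fin 4 → Fin 4 → ℝ) : Matrix (Fin 6) (Fin 6) ℝ :=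
  Matrix.of fun A B => G (pFst A) (pSnd A) (pFst B) (pSnd B)

/-- The totally antisymmetric Levi-Civita symbol on four indices with `ε₀₁₂₃ = 1`. -/
def eps (a b c d : Fin 4) : ℝ :=
  (Matrix.of fun i j => if (![a, b, c, d] : Fin 4 → Fin 4) i = j then (1 : ℝ) else 0).det

/-- The Petrov index associated to a pair of distinct indices (arbitrary on the diagonal). -/
def bIdx : Fin 4 → Fin 4 → Fin 6 :=
  ![![0, 0, 1, 2], ![0, 0, 3, 4], ![1, 3, 0, 5], ![2, 4, 5, 0]]

/-- The sign relating the tensor component `T_{ab}` to the Petrov component at `bIdx a b`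
(`0` on the diagonal); the pair `[31]` is stored in the order `(3,1)`. -/
def bSgn : Fin 4 → Fin 4 → ℝ :=
  ![![0, 1, 1, 1], ![-1, 0, 1, -1], ![-1, -1, 0, 1], ![-1, 1, -1, 0]]

/-- The rank-4 tensor with the area metric symmetries reconstructed from a
(symmetric) Petrov matrix. -/
def fromPetrov (M : Matrix (Fin 6) (Fin 6) ℝ) : Fin 4 → Fin 4 → Fin 4 → Fin 4 → ℝ :=
  fun a b c d => bSgn a b * bSgn c d * M (bIdx a b) (bIdx c d)

/-- The components `(G⁻¹)^{abcd}` of the inverse area metric, characterized by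
`Petrov(G⁻¹) = Petrov(G)⁻¹`. -/
def ginv (G : Fin 4 → Fin 4 → Fin 4 → Fin 4 → ℝ) : Fin 4 → Fin 4 → Fin 4 → Fin 4 → ℝ :=
  fromPetrov (petrov G)⁻¹

/-- The area metric volume form `(ω_G)_{abcd} = |det Petrov(G)|^{1/6} ε_{abcd}`. -/
def vol (G : Fin 4 → Fin 4 → Fin 4 → Fin 4 → ℝ) (a b c d : Fin 4) : ℝ :=
  |(petrov G).det| ^ ((1 : ℝ) / 6) * eps a b c d

/-- The inverse volume form `(ω_G⁻¹)^{abcd} = |det Petrov(G)|^{-1/6} ε^{abcd}`. -/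
def volInv (G : Fin 4 → Fin 4 → Fin 4 → Fin 4 → ℝ) (a b c d : Fin 4) : ℝ :=
  |(petrov G).det| ^ (-(1 : ℝ) / 6) * eps a b c d

/-- The Fresnel polynomial
`𝒢(k,k,k,k) = -(1/24)(ω_G)_{mnpq}(ω_G)_{rstu}(G⁻¹)^{mnra}(G⁻¹)^{bpsc}(G⁻¹)^{dqtu} k_a k_b k_c k_d`
(all repeated indices summed over `0,…,3`; the symmetrization over `a,b,c,d` in the Fresnel
tensor is immaterial after contraction with `k_a k_b k_c k_d`). -/
def fresnelPoly (G : Fin 4 → Fin 4 → Fin 4 → Fin 4 → ℝ) (k : Fin 4 → ℝ) : ℝ :=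
  -(1 / 24) * ∑ m : Fin 4, ∑ n : Fin 4, ∑ p : Fin 4, ∑ q : Fin 4, ∑ r : Fin 4, ∑ s : Fin 4,
      ∑ t : Fin 4, ∑ u : Fin 4, ∑ a : Fin 4, ∑ b : Fin 4, ∑ c : Fin 4, ∑ d : Fin 4,
    vol G m n p q * vol G r s t u * ginv G m n r a * ginv G b p s c * ginv G d q t u *
      k a * k b * k c * k d

/-- The endomorphism `K = ω̂_G ∘ Ĝ⁻¹` of `Λ²((ℝ⁴)*)`, represented in Petrov coordinates
(an element `Ω ∈ Λ²((ℝ⁴)*)` is represented by its six components `Ω_{[ab]}` over the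
ordered pairs `[01],[02],[03],[12],[31],[23]`). -/
def Kmat (G : Fin 4 → Fin 4 → Fin 4 → Fin 4 → ℝ) : Matrix (Fin 6) (Fin 6) ℝ :=
  petrov (vol G) * (petrov G)⁻¹

/-!
Write `h = G⁻¹`, and for a covector `ξ` let `M` be the matrix `h^{bpsc} ξ_b ξ_c`, which `ξ`
annihilates from both sides. The engine is the Schouten identity: in dimension four, `k_i ε_{mnpq}`
vanishes when antisymmetrized over all five indices. Contracting with `ξ` twice, it turns
`ξ_i ξ_j 𝒢(ξ, ξ, ξ, ξ)` into a multiple of `ε_{inpq} ε_{jrst} M^{nr} M^{ps} M^{qt}`, the adjugate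
of `M`. If a second, independent covector `η` annihilates `M` from the left, then `M` has corank
at least two, so its adjugate and with it `𝒢(ξ, ξ, ξ, ξ)` vanish.

The endomorphism `K` is self-adjoint for the wedge pairing, so the eigenvector `Ω₁` starting a
Jordan chain is isotropic, that is `Ω₁ = θ¹ ∧ θ²`. Any nonzero `ξ` in the plane of `θ¹, θ²` has a
partner `η` there with `ξ ∧ η` a nonzero multiple of `Ω₁`, and the eigenvector equation says
`h(ξ ∧ η) ∝ ⋆(ξ ∧ η)`, whose contraction with `ξ` is `0`: this is `η M = 0`.
-/

section LeviCivita

open Matrix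

-- This is the rule of Cramer for the transpose of the matrix with rows `e_{v r}`.
theorem mul_det_one_submatrix {n R : Type*} [Fintype n] [DecidableEq n] [CommRing R]
    (k : n → R) (i : n) (v : n → n) :
    k i * ((1 : Matrix n n R).submatrix v id).det =
      ∑ r, k (v r) * ((1 : Matrix n n R).submatrix (Function.update v r i) id).det := by
  set A := (1 : Matrix n n R).submatrix v id
  have hAk : A *ᵥ k = k ∘ v := by
    ext r
    simp [A, mulVec, dotProduct, one_apply]
  have hrow (r : n) : A.updateRow r (Pi.single i 1) =
      (1 : Matrix n n R).submatrix (Function.update v r i) id := by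
    ext s j
    simp only [A, updateRow_apply, submatrix_apply, one_apply, Function.update_apply, id]
    split_ifs <;> simp_all [eq_comm]
  calc k i * A.det = k ⬝ᵥ (Aᵀ *ᵥ cramer Aᵀ (Pi.single i 1)) := by
        rw [mulVec_cramer, det_transpose, dotProduct_smul, dotProduct_single_one, smul_eq_mul,
          mul_comm]
    _ = (k ∘ v) ⬝ᵥ cramer Aᵀ (Pi.single i 1) := by
        rw [dotProduct_mulVec, vecMul_transpose, hAk]
    _ = _ := by simp only [dotProduct, Function.comp_apply, cramer_transpose_apply, hrow]

theorem mul_det_one_submatrix_fin {R : Type*} [CommRing R] {n : ℕ} (k : Fin (n + 1) → R)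
    (i : Fin (n + 1)) (v : Fin (n + 1) → Fin (n + 1)) :
    k i * ((1 : Matrix _ _ R).submatrix v id).det =
      ∑ r : Fin (n + 1), (-1) ^ (r : ℕ) * k (v r) *
        ((1 : Matrix _ _ R).submatrix (Fin.cons i (r.removeNth v)) id).det := by
  rw [mul_det_one_submatrix]
  refine Finset.sum_congr rfl fun r _ ↦ ?_
  rw [← Fin.insertNth_removeNth, ← Fin.cons_comp_cycleRange]
  have h := det_permute r.cycleRange
    ((1 : Matrix _ _ R).submatrix (Fin.cons i (r.removeNth v) : Fin (n + 1) → Fin (n + 1)) id)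
  rw [submatrix_submatrix, Function.id_comp, Fin.sign_cycleRange] at h
  rw [h]
  push_cast
  ring

-- The Schouten identity.
theorem mul_eps (k : Fin 4 → ℝ) (i m n p q : Fin 4) :
    k i * eps m n p q =
      k m * eps i n p q - k n * eps i m p q + k p * eps i m n q - k q * eps i m n p := by
  have hcons (r : Fin 4) : (Fin.cons i (r.removeNth ![m, n, p, q]) : Fin 4 → Fin 4) =
      ![![i, n, p, q], ![i, m, p, q], ![i, m, n, q], ![i, m, n, p]] r := by
    ext j
    fin_cases r <;> fin_cases j <;> rfl
  calc k i * eps m n p q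
      = ∑ r : Fin 4, (-1) ^ (r : ℕ) * k (![m, n, p, q] r) *
          ((1 : Matrix (Fin 4) (Fin 4) ℝ).submatrix
            (![![i, n, p, q], ![i, m, p, q], ![i, m, n, q], ![i, m, n, p]] r) id).det := by
        simp only [← hcons]
        exact mul_det_one_submatrix_fin k i ![m, n, p, q]
    _ = _ := by
        rw [Fin.sum_univ_four]
        change (-1) ^ 0 * k m * eps i n p q + (-1) ^ 1 * k n * eps i m p q +
          (-1) ^ 2 * k p * eps i m n q + (-1) ^ 3 * k q * eps i m n p = _
        ring

/-- The full contraction `ε_{mnpq} T^{mnpq}` with the Levi-Civita symbol. -/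
def epsContract (T : Fin 4 → Fin 4 → Fin 4 → Fin 4 → ℝ) : ℝ :=
  ∑ m, ∑ n, ∑ p, ∑ q, eps m n p q * T m n p q

/-- The contraction `ε_{inpq} U^{npq}`: up to normalization, the Hodge dual of the
antisymmetrization of `U`. -/
def hodge (U : Fin 4 → Fin 4 → Fin 4 → ℝ) (i : Fin 4) : ℝ :=
  ∑ n, ∑ p, ∑ q, eps i n p q * U n p q

theorem const_mul_epsContract (c : ℝ) (T : Fin 4 → Fin 4 → Fin 4 → Fin 4 → ℝ) :
    c * epsContract T = epsContract fun m n p q ↦ c * T m n p q := by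
  simp only [epsContract, Finset.mul_sum, mul_left_comm]

theorem epsContract_sum {ι : Type*} (s : Finset ι) (T : ι → Fin 4 → Fin 4 → Fin 4 → Fin 4 → ℝ) :
    epsContract (fun m n p q ↦ ∑ i ∈ s, T i m n p q) = ∑ i ∈ s, epsContract (T i) := by
  simp only [epsContract, Finset.mul_sum, Finset.sum_comm (γ := Fin 4) (α := ι)]

theorem epsContract_hodge (U : Fin 4 → Fin 4 → Fin 4 → Fin 4 → Fin 4 → Fin 4 → Fin 4 → ℝ)
    (i : Fin 4) :
    epsContract (fun m n p q ↦ hodge (U m n p q) i) =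
      hodge (fun r s t ↦ epsContract fun m n p q ↦ U m n p q r s t) i := by
  simp only [hodge, epsContract_sum, const_mul_epsContract]

theorem mul_epsContract (k : Fin 4 → ℝ) (T : Fin 4 → Fin 4 → Fin 4 → Fin 4 → ℝ) (i : Fin 4) :
    k i * epsContract T =
      hodge (fun n p q ↦ ∑ m, k m * T m n p q) i - hodge (fun m p q ↦ ∑ n, k n * T m n p q) i +
        hodge (fun m n q ↦ ∑ p, k p * T m n p q) i -
        hodge (fun m n p ↦ ∑ q, k q * T m n p q) i := by
  have hsum : k i * epsContract T = ∑ m, ∑ n, ∑ p, ∑ q,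
      (eps i n p q * (k m * T m n p q) - eps i m p q * (k n * T m n p q) +
        eps i m n q * (k p * T m n p q) - eps i m n p * (k q * T m n p q)) := by
    simp only [epsContract, Finset.mul_sum]
    refine Finset.sum_congr rfl fun m _ ↦ Finset.sum_congr rfl fun n _ ↦
      Finset.sum_congr rfl fun p _ ↦ Finset.sum_congr rfl fun q _ ↦ ?_
    linear_combination T m n p q * mul_eps k i m n p q
  have hm : ∑ m, ∑ n, ∑ p, ∑ q, eps i n p q * (k m * T m n p q) =
      hodge (fun n p q ↦ ∑ m, k m * T m n p q) i := by
    simp only [hodge, Finset.mul_sum]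
    rw [Finset.sum_comm]
    exact Finset.sum_congr rfl fun n _ ↦ Finset.sum_comm_cycle.symm
  have hn : ∑ m, ∑ n, ∑ p, ∑ q, eps i m p q * (k n * T m n p q) =
      hodge (fun m p q ↦ ∑ n, k n * T m n p q) i := by
    simp only [hodge, Finset.mul_sum]
    exact Finset.sum_congr rfl fun m _ ↦ Finset.sum_comm_cycle.symm
  have hp : ∑ m, ∑ n, ∑ p, ∑ q, eps i m n q * (k p * T m n p q) =
      hodge (fun m n q ↦ ∑ p, k p * T m n p q) i := by
    simp only [hodge, Finset.mul_sum]
    exact Finset.sum_congr rfl fun m _ ↦ Finset.sum_congr rfl fun n _ ↦ Finset.sum_comm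
  simp only [hsum, Finset.sum_sub_distrib, Finset.sum_add_distrib, hm, hn, hp]
  simp only [hodge, Finset.mul_sum]

end LeviCivita

section Contractions

theorem sum_mul_sum_mul_eq_zero_of_skew {ι R : Type*} [Fintype ι] [CommRing R]
    [IsAddTorsionFree R] (k : ι → R) {X : ι → ι → R} (hX : ∀ a b, X a b = -X b a) :
    ∑ a, k a * ∑ b, k b * X a b = 0 := by
  refine self_eq_neg.mp ?_
  calc ∑ a, k a * ∑ b, k b * X a b = ∑ b, ∑ a, k a * (k b * X a b) := by
        simp only [Finset.mul_sum]
        exact Finset.sum_comm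
    _ = -∑ b, k b * ∑ a, k a * X b a := by
        simp only [Finset.mul_sum, ← Finset.sum_neg_distrib]
        refine Finset.sum_congr rfl fun b _ ↦ Finset.sum_congr rfl fun a _ ↦ ?_
        rw [hX a b]
        ring

variable {k : Fin 4 → ℝ}

theorem mul_epsContract_of_skew_left {T : Fin 4 → Fin 4 → Fin 4 → Fin 4 → ℝ}
    (hT : ∀ m n p q, T m n p q = -T n m p q) (h₃ : ∀ m n q, ∑ p, k p * T m n p q = 0)
    (h₄ : ∀ m n p, ∑ q, k q * T m n p q = 0) (i : Fin 4) :
    k i * epsContract T = 2 * hodge (fun n p q ↦ ∑ m, k m * T m n p q) i := by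
  have h₂ (m p q : Fin 4) : ∑ n, k n * T m n p q = -∑ n, k n * T n m p q := by
    simp only [hT m, mul_neg, Finset.sum_neg_distrib]
  rw [mul_epsContract]
  simp only [h₂, h₃, h₄, hodge, mul_zero, mul_neg, Finset.sum_neg_distrib, Finset.sum_const_zero]
  ring

theorem mul_epsContract_of_skew_right {T : Fin 4 → Fin 4 → Fin 4 → Fin 4 → ℝ}
    (hT : ∀ m n p q, T m n p q = -T m n q p) (h₁ : ∀ n p q, ∑ m, k m * T m n p q = 0)
    (h₂ : ∀ m p q, ∑ n, k n * T m n p q = 0) (i : Fin 4) :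
    k i * epsContract T = -2 * hodge (fun m n p ↦ ∑ q, k q * T m n p q) i := by
  have h₃ (m n q : Fin 4) : ∑ p, k p * T m n p q = -∑ p, k p * T m n q p := by
    simp only [hT m n _ q, mul_neg, Finset.sum_neg_distrib]
  rw [mul_epsContract]
  simp only [h₁, h₂, h₃, hodge, mul_zero, mul_neg, Finset.sum_neg_distrib, Finset.sum_const_zero]
  ring

theorem mul_hodge_comm {U : Fin 4 → Fin 4 → Fin 4 → ℝ}
    (h₁ : ∀ p q, ∑ n, k n * U n p q = 0) (h₂ : ∀ n q, ∑ p, k p * U n p q = 0)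
    (h₃ : ∀ n p, ∑ q, k q * U n p q = 0) (i l : Fin 4) :
    k l * hodge U i = k i * hodge U l := by
  -- In the Schouten identity contracted with `δ_i ⊗ U`, only `δ_i` is not annihilated by `k`.
  have h := mul_epsContract k (fun m n p q ↦ Pi.single (M := fun _ ↦ ℝ) i 1 m * U n p q) l
  simpa [epsContract, hodge, mul_left_comm _ (Pi.single _ _ _), Pi.single_apply,
    ← Finset.mul_sum, h₁, h₂, h₃, mul_left_comm _ (k _)] using h

end Contractions

section Fresnel

variable (h : Fin 4 → Fin 4 → Fin 4 → Fin 4 → ℝ) (k : Fin 4 → ℝ)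

/-- The contraction `h^{mnra} k_a`. -/
def contractLast (m n r : Fin 4) : ℝ := ∑ a, k a * h m n r a

/-- The contraction `h^{dqtu} k_d`. -/
def contractFirst (q t u : Fin 4) : ℝ := ∑ d, k d * h d q t u

/-- The double contraction `h^{bpsc} k_b k_c`, the middle factor of the Fresnel polynomial. -/
def fresnelMatrix (p s : Fin 4) : ℝ := ∑ b, k b * ∑ c, k c * h b p s c

/-- The contraction `ε_{mnpq} ε_{rstu} h^{mnra} h^{bpsc} h^{dqtu} k_a k_b k_c k_d`: for `h = G⁻¹`
it is the Fresnel polynomial of `G` without its normalization. -/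
def fresnelContract : ℝ :=
  epsContract fun m n p q ↦ epsContract fun r s t u ↦
    contractLast h k m n r * fresnelMatrix h k p s * contractFirst h k q t u

theorem sum_mul_contractLast (n r : Fin 4) :
    ∑ m, k m * contractLast h k m n r = fresnelMatrix h k n r :=
  rfl

theorem sum_mul_contractFirst (q t : Fin 4) :
    ∑ u, k u * contractFirst h k q t u = fresnelMatrix h k q t := by
  simp only [contractFirst, fresnelMatrix, Finset.mul_sum]
  rw [Finset.sum_comm]
  simp only [mul_left_comm]

variable {h}

theorem contractLast_swap (hfst : ∀ a b c d, h a b c d = -h b a c d) (m n r : Fin 4) :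
    contractLast h k m n r = -contractLast h k n m r := by
  simp only [contractLast, hfst m n, mul_neg, Finset.sum_neg_distrib]

theorem contractFirst_swap (hlst : ∀ a b c d, h a b c d = -h a b d c) (q t u : Fin 4) :
    contractFirst h k q t u = -contractFirst h k q u t := by
  simp only [contractFirst, hlst _ q t, mul_neg, Finset.sum_neg_distrib]

theorem sum_mul_contractLast_last (hlst : ∀ a b c d, h a b c d = -h a b d c) (m n : Fin 4) :
    ∑ r, k r * contractLast h k m n r = 0 :=
  sum_mul_sum_mul_eq_zero_of_skew k (hlst m n)

theorem sum_mul_fresnelMatrix_left (hfst : ∀ a b c d, h a b c d = -h b a c d) (s : Fin 4) :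
    ∑ p, k p * fresnelMatrix h k p s = 0 := by
  simp only [← sum_mul_contractLast]
  exact sum_mul_sum_mul_eq_zero_of_skew k fun a b ↦ contractLast_swap k hfst b a s

theorem sum_mul_fresnelMatrix_right (hlst : ∀ a b c d, h a b c d = -h a b d c) (p : Fin 4) :
    ∑ s, k s * fresnelMatrix h k p s = 0 := by
  simp only [← sum_mul_contractFirst]
  exact sum_mul_sum_mul_eq_zero_of_skew k fun a b ↦ contractFirst_swap k hlst p a b

theorem mul_epsContract_contractFirst (hlst : ∀ a b c d, h a b c d = -h a b d c)
    (j m n p q : Fin 4) :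
    k j * epsContract (fun r s t u ↦
        contractLast h k m n r * fresnelMatrix h k p s * contractFirst h k q t u) =
      -2 * hodge (fun r s t ↦
        contractLast h k m n r * fresnelMatrix h k p s * fresnelMatrix h k q t) j := by
  rw [mul_epsContract_of_skew_right]
  · simp only [mul_left_comm (k _), ← Finset.mul_sum, sum_mul_contractFirst]
  · intro r s t u
    rw [contractFirst_swap k hlst q t u, mul_neg]
  · intro s t u
    simp only [← mul_assoc, ← Finset.sum_mul, sum_mul_contractLast_last k hlst, zero_mul]
  · intro r t u
    simp only [mul_right_comm _ (fresnelMatrix h k p _), mul_left_comm (k _), ← Finset.mul_sum,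
      sum_mul_fresnelMatrix_right k hlst, mul_zero]

theorem mul_epsContract_contractLast (hfst : ∀ a b c d, h a b c d = -h b a c d)
    (i r s t : Fin 4) :
    k i * epsContract (fun m n p q ↦
        contractLast h k m n r * fresnelMatrix h k p s * fresnelMatrix h k q t) =
      2 * hodge (fun n p q ↦
        fresnelMatrix h k n r * fresnelMatrix h k p s * fresnelMatrix h k q t) i := by
  rw [mul_epsContract_of_skew_left]
  · simp only [← mul_assoc, ← Finset.sum_mul, sum_mul_contractLast]
  · intro m n p q
    rw [contractLast_swap k hfst m n r, neg_mul, neg_mul]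
  · intro m n q
    simp only [mul_right_comm _ (fresnelMatrix h k _ s), mul_left_comm (k _), ← Finset.mul_sum,
      sum_mul_fresnelMatrix_left k hfst, mul_zero]
  · intro m n p
    simp only [mul_left_comm (k _), ← Finset.mul_sum, sum_mul_fresnelMatrix_left k hfst, mul_zero]

theorem mul_fresnelContract (hlst : ∀ a b c d, h a b c d = -h a b d c) (j : Fin 4) :
    k j * fresnelContract h k = -2 * hodge (fun r s t ↦ epsContract fun m n p q ↦
      contractLast h k m n r * fresnelMatrix h k p s * fresnelMatrix h k q t) j := by
  rw [← epsContract_hodge, fresnelContract]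
  simp only [const_mul_epsContract, ← mul_epsContract_contractFirst k hlst]

theorem fresnelContract_eq_zero {η : Fin 4 → ℝ} (hfst : ∀ a b c d, h a b c d = -h b a c d)
    (hlst : ∀ a b c d, h a b c d = -h a b d c) {a b : Fin 4} (hkη : k a * η b - k b * η a ≠ 0)
    (hη : ∀ s, ∑ p, η p * fresnelMatrix h k p s = 0) : fresnelContract h k = 0 := by
  have hE (r s t : Fin 4) : epsContract (fun m n p q ↦
      contractLast h k m n r * fresnelMatrix h k p s * fresnelMatrix h k q t) = 0 := by
    have hD := mul_hodge_comm (k := η) (U := fun n p q ↦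
      fresnelMatrix h k n r * fresnelMatrix h k p s * fresnelMatrix h k q t)
      (fun p q ↦ by simp only [← mul_assoc, ← Finset.sum_mul, hη, zero_mul])
      (fun n q ↦ by simp only [mul_right_comm _ (fresnelMatrix h k _ s), mul_left_comm (η _),
        ← Finset.mul_sum, hη, mul_zero])
      (fun n p ↦ by simp only [mul_left_comm (η _), ← Finset.mul_sum, hη, mul_zero]) a b
    refine (mul_eq_zero.mp ?_).resolve_left hkη
    linear_combination η b * mul_epsContract_contractLast k hfst a r s t -
      η a * mul_epsContract_contractLast k hfst b r s t + 2 * hD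
  have hS (j : Fin 4) : k j * fresnelContract h k = 0 := by
    rw [mul_fresnelContract k hlst]
    simp [hE, hodge]
  refine (mul_eq_zero.mp ?_).resolve_left hkη
  linear_combination η b * hS a - η a * hS b

end Fresnel

theorem sum_mul_sum_mul_sum_mul_sum {ι R : Type*} [Fintype ι] [CommSemiring R] (x z k : ι → R)
    (y : ι → ι → R) (e f : R) :
    ∑ a, ∑ b, ∑ c, ∑ d, e * f * x a * y b c * z d * k a * k b * k c * k d =
      e * (f * ((∑ a, k a * x a) * (∑ b, k b * ∑ c, k c * y b c) * ∑ d, k d * z d)) := by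
  rw [mul_comm (_ * _) (∑ d, k d * z d), mul_comm (∑ a, k a * x a)]
  simp only [Finset.mul_sum, Finset.sum_mul]
  refine Finset.sum_congr rfl fun a _ ↦ Finset.sum_congr rfl fun b _ ↦
    Finset.sum_congr rfl fun c _ ↦ Finset.sum_congr rfl fun d _ ↦ ?_
  ring

/-- The density `|det Petrov(G)|^{1/6}` of the volume form `ω_G` relative to `ε`. -/
def volDensity (G : Fin 4 → Fin 4 → Fin 4 → Fin 4 → ℝ) : ℝ := |(petrov G).det| ^ ((1 : ℝ) / 6)

theorem fresnelPoly_eq (G : Fin 4 → Fin 4 → Fin 4 → Fin 4 → ℝ) (k : Fin 4 → ℝ) :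
    fresnelPoly G k =
      -(1 / 24) * volDensity G ^ 2 * fresnelContract (ginv G) k := by
  have hvol (T : Fin 4 → Fin 4 → Fin 4 → Fin 4 → ℝ) :
      ∑ m, ∑ n, ∑ p, ∑ q, vol G m n p q * T m n p q =
        volDensity G * epsContract T := by
    simp only [vol, volDensity, epsContract, mul_assoc, Finset.mul_sum]
  calc fresnelPoly G k
      = -(1 / 24) * (volDensity G * (volDensity G *
          fresnelContract (ginv G) k)) := by
        simp only [fresnelPoly, sum_mul_sum_mul_sum_mul_sum, ← Finset.mul_sum, hvol,
          ← const_mul_epsContract]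
        rfl
    _ = _ := by ring

section Bivectors

open Matrix

/-- The Petrov components of the 2-form `x ∧ y`. -/
def wedge (x y : Fin 4 → ℝ) (A : Fin 6) : ℝ :=
  x (pFst A) * y (pSnd A) - x (pSnd A) * y (pFst A)

theorem wedge_smul_add_smul (x y : Fin 4 → ℝ) (s r u v : ℝ) :
    wedge (s • x + r • y) (u • x + v • y) = (s * v - r * u) • wedge x y := by
  ext A
  simp only [wedge, Pi.add_apply, Pi.smul_apply, smul_eq_mul]
  ring

theorem linearIndependent_of_wedge_ne_zero {x y : Fin 4 → ℝ} (hxy : wedge x y ≠ 0) :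
    LinearIndependent ℝ ![x, y] := by
  refine LinearIndependent.pair_iff.mpr fun s t hst ↦ ?_
  have hs : wedge (s • x + t • y) y = s • wedge x y := by
    simpa using wedge_smul_add_smul x y s t 0 1
  have ht : wedge x (s • x + t • y) = t • wedge x y := by
    simpa using wedge_smul_add_smul x y 1 0 s t
  simp only [hst] at hs ht
  constructor
  · refine (smul_eq_zero.mp ?_).resolve_right hxy
    rw [← hs]; ext; simp [wedge]
  · refine (smul_eq_zero.mp ?_).resolve_right hxy
    rw [← ht]; ext; simp [wedge]

/-- The Gram matrix, in Petrov coordinates, of the wedge pairing `Λ² × Λ² → Λ⁴ ≅ ℝ`. Reversing the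
Petrov order exchanges complementary index pairs, and storing `[31]` rather than `[13]` makes all
signs positive. -/
def wedgePairing : Matrix (Fin 6) (Fin 6) ℝ := (Fin.revPerm : Equiv.Perm (Fin 6)).permMatrix ℝ

theorem wedgePairing_mulVec (w : Fin 6 → ℝ) :
    wedgePairing *ᵥ w = ![w 5, w 4, w 3, w 2, w 1, w 0] := by
  rw [wedgePairing, permMatrix_mulVec]
  ext A
  fin_cases A <;> rfl

theorem transpose_wedgePairing : wedgePairingᵀ = wedgePairing := by
  rw [wedgePairing, transpose_permMatrix]
  rfl

theorem wedgePairing_mul_self : wedgePairing * wedgePairing = 1 := by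
  have hrev : (Fin.revPerm : Equiv.Perm (Fin 6)) * Fin.revPerm = 1 := by
    ext
    simp
  rw [wedgePairing, ← permMatrix_mul, hrev, permMatrix_one]

/-- The component with indices `a`, `b` (in any order) of the 2-form with Petrov components `w`. -/
def skew (w : Fin 6 → ℝ) (a b : Fin 4) : ℝ := bSgn a b * w (bIdx a b)

theorem skew_smul (c : ℝ) (w : Fin 6 → ℝ) (a b : Fin 4) : skew (c • w) a b = c * skew w a b :=
  mul_left_comm _ _ _

theorem skew_swap (w : Fin 6 → ℝ) (a b : Fin 4) : skew w a b = -skew w b a := by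
  fin_cases a <;> fin_cases b <;> simp [skew, bSgn, bIdx]

theorem wedge_skew_skew {w : Fin 6 → ℝ} (hw : w ⬝ᵥ wedgePairing *ᵥ w = 0) (A : Fin 6) :
    wedge (skew w (pFst A)) (skew w (pSnd A)) = w A • w := by
  have hplucker : w 0 * w 5 + w 1 * w 4 + w 2 * w 3 = 0 := by
    simp only [wedgePairing_mulVec, dotProduct, Fin.sum_univ_six, cons_val] at hw
    linarith
  ext B
  fin_cases A <;> fin_cases B <;>
    simp only [wedge, skew, pFst, pSnd, bSgn, bIdx, cons_val, Fin.zero_eta, Fin.mk_one,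
      Fin.reduceFinMk, Pi.smul_apply, smul_eq_mul] <;>
    linarith

theorem exists_wedge_eq {w : Fin 6 → ℝ} (hw : w ⬝ᵥ wedgePairing *ᵥ w = 0) :
    ∃ x y : Fin 4 → ℝ, wedge x y = w := by
  by_cases h0 : w = 0
  · exact ⟨0, 0, by ext; simp [wedge, h0]⟩
  obtain ⟨A, hA⟩ := Function.ne_iff.mp h0
  refine ⟨(w A)⁻¹ • skew w (pFst A), skew w (pSnd A), ?_⟩
  have hscale := wedge_smul_add_smul (skew w (pFst A)) (skew w (pSnd A)) (w A)⁻¹ 0 0 1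
  simpa [wedge_skew_skew hw, inv_smul_smul₀ hA] using hscale

theorem sum_sum_mul_skew (x y : Fin 4 → ℝ) (w : Fin 6 → ℝ) :
    ∑ a, x a * ∑ b, y b * skew w a b = wedge x y ⬝ᵥ w := by
  simp only [dotProduct, Fin.sum_univ_four, Fin.sum_univ_six, wedge, skew, pFst, pSnd, bSgn, bIdx,
    cons_val]
  ring

theorem sum_mul_skew_wedgePairing_mulVec_wedge (x y : Fin 4 → ℝ) (a : Fin 4) :
    ∑ b, x b * skew (wedgePairing *ᵥ wedge x y) a b = 0 := by
  fin_cases a <;>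
    simp only [wedgePairing_mulVec, Fin.sum_univ_four, wedge, skew, pFst, pSnd,
      bSgn, bIdx, cons_val, Fin.zero_eta, Fin.mk_one, Fin.reduceFinMk] <;> ring

theorem fromPetrov_eq_skew (H : Matrix (Fin 6) (Fin 6) ℝ) (a b c d : Fin 4) :
    fromPetrov H a b c d = skew (fun A ↦ skew (H A) c d) a b :=
  mul_assoc _ _ _

theorem fromPetrov_swap_left (H : Matrix (Fin 6) (Fin 6) ℝ) (a b c d : Fin 4) :
    fromPetrov H a b c d = -fromPetrov H b a c d := by
  rw [fromPetrov_eq_skew, skew_swap, fromPetrov_eq_skew]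

theorem fromPetrov_swap_right (H : Matrix (Fin 6) (Fin 6) ℝ) (a b c d : Fin 4) :
    fromPetrov H a b c d = -fromPetrov H a b d c := by
  have h := skew_swap (H (bIdx a b)) c d
  simp only [skew] at h
  simp only [fromPetrov]
  linear_combination bSgn a b * h

theorem sum_mul_fresnelMatrix_fromPetrov (H : Matrix (Fin 6) (Fin 6) ℝ) (x y : Fin 4 → ℝ)
    (s : Fin 4) :
    ∑ p, y p * fresnelMatrix (fromPetrov H) x p s =
      ∑ c, x c * skew (wedge x y ᵥ* H) s c := by
  calc ∑ p, y p * fresnelMatrix (fromPetrov H) x p s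
      = ∑ c, x c * ∑ b, x b * ∑ p, y p * skew (fun A ↦ skew (H A) s c) b p := by
        simp only [fresnelMatrix, fromPetrov_eq_skew, Finset.mul_sum]
        rw [Finset.sum_comm_cycle]
        refine Finset.sum_congr rfl fun c _ ↦ ?_
        rw [Finset.sum_comm]
        refine Finset.sum_congr rfl fun b _ ↦ Finset.sum_congr rfl fun p _ ↦ ?_
        ring
    _ = ∑ c, x c * (wedge x y ⬝ᵥ fun A ↦ skew (H A) s c) := by simp only [sum_sum_mul_skew]
    _ = _ := by simp only [skew, vecMul, dotProduct, Finset.mul_sum, mul_left_comm]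

theorem eps_pFst_pSnd (A B : Fin 6) :
    eps (pFst A) (pSnd A) (pFst B) (pSnd B) = if B = Fin.rev A then 1 else 0 := by
  have hdet : ∀ A B : Fin 6, ((1 : Matrix (Fin 4) (Fin 4) ℤ).submatrix
      ![pFst A, pSnd A, pFst B, pSnd B] id).det = if B = Fin.rev A then 1 else 0 := by
    simp only [det_succ_row_zero, Fin.sum_univ_succ]
    decide
  calc eps (pFst A) (pSnd A) (pFst B) (pSnd B)
      = (((1 : Matrix (Fin 4) (Fin 4) ℤ).map Int.cast).submatrix
          ![pFst A, pSnd A, pFst B, pSnd B] id).det := by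
        rw [Matrix.map_one _ Int.cast_zero Int.cast_one]; rfl
    _ = (if B = Fin.rev A then 1 else 0 : ℤ) := by
        rw [submatrix_map, ← Int.cast_det, hdet]
    _ = _ := by norm_cast

end Bivectors

section JordanChain

open Matrix

theorem dotProduct_mulVec_self_eq_zero_of_jordanChain {n R : Type*} [Fintype n] [CommRing R]
    {J K : Matrix n n R} (hJK : J * K = Kᵀ * J) {μ : R} {x y : n → R} (hx : K *ᵥ x = μ • x)
    (hy : K *ᵥ y = x + μ • y) : x ⬝ᵥ J *ᵥ x = 0 := by
  have hadj : x ⬝ᵥ J *ᵥ (K *ᵥ y) = (K *ᵥ x) ⬝ᵥ J *ᵥ y := by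
    rw [mulVec_mulVec, hJK, ← mulVec_mulVec, dotProduct_mulVec, vecMul_transpose]
  rw [hx, hy, mulVec_add, mulVec_smul, dotProduct_add, dotProduct_smul, smul_dotProduct] at hadj
  exact add_eq_right.mp hadj

theorem petrov_vol (G : Fin 4 → Fin 4 → Fin 4 → Fin 4 → ℝ) :
    petrov (vol G) = volDensity G • wedgePairing := by
  ext A B
  simp [petrov, vol, volDensity, wedgePairing, eps_pFst_pSnd, eq_comm]

variable {G : Fin 4 → Fin 4 → Fin 4 → Fin 4 → ℝ}

theorem wedgePairing_mul_Kmat : wedgePairing * Kmat G = volDensity G • (petrov G)⁻¹ := by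
  rw [Kmat, petrov_vol, smul_mul, Matrix.mul_smul, ← Matrix.mul_assoc, wedgePairing_mul_self,
    Matrix.one_mul]

theorem wedgePairing_mul_Kmat_eq_transpose_mul (hsymm : (petrov G).IsSymm) :
    wedgePairing * Kmat G = (Kmat G)ᵀ * wedgePairing := by
  have h := congrArg transpose (wedgePairing_mul_Kmat (G := G))
  rw [transpose_mul, transpose_wedgePairing] at h
  rw [h, wedgePairing_mul_Kmat, transpose_smul, transpose_nonsing_inv, hsymm]

theorem vecMul_petrov_inv_of_Kmat_mulVec (hsymm : (petrov G).IsSymm)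
    (hinv : IsUnit (petrov G).det) {μ : ℝ} {w : Fin 6 → ℝ} (hw : Kmat G *ᵥ w = μ • w) :
    w ᵥ* (petrov G)⁻¹ = ((volDensity G)⁻¹ * μ) • wedgePairing *ᵥ w := by
  have hvol : volDensity G ≠ 0 := by
    rw [volDensity, Real.rpow_ne_zero (abs_nonneg _) (by norm_num)]
    exact abs_ne_zero.mpr hinv.ne_zero
  have h : volDensity G • ((petrov G)⁻¹ *ᵥ w) = μ • wedgePairing *ᵥ w := by
    rw [← smul_mulVec, ← wedgePairing_mul_Kmat, ← mulVec_mulVec, hw, mulVec_smul]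
  rw [← mulVec_transpose, transpose_nonsing_inv, hsymm, ← smul_smul, ← h, inv_smul_smul₀ hvol]

theorem fresnelPoly_eq_zero_of_vecMul {x y : Fin 4 → ℝ} (hxy : wedge x y ≠ 0) {μ : ℝ}
    (h : wedge x y ᵥ* (petrov G)⁻¹ = μ • wedgePairing *ᵥ wedge x y) : fresnelPoly G x = 0 := by
  obtain ⟨A, hA⟩ := Function.ne_iff.mp hxy
  rw [fresnelPoly_eq, ginv, fresnelContract_eq_zero x (fromPetrov_swap_left _)
    (fromPetrov_swap_right _) hA fun s ↦ ?_, mul_zero]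
  rw [sum_mul_fresnelMatrix_fromPetrov, h]
  simp only [skew_smul, mul_left_comm _ μ, ← Finset.mul_sum,
    sum_mul_skew_wedgePairing_mulVec_wedge, mul_zero]

theorem fresnelPoly_eq_zero_of_mem_span (hsymm : (petrov G).IsSymm)
    (hinv : IsUnit (petrov G).det) {μ : ℝ} {x y : Fin 4 → ℝ} (hxy : wedge x y ≠ 0)
    (hK : Kmat G *ᵥ wedge x y = μ • wedge x y) {ξ : Fin 4 → ℝ}
    (hξ : ξ ∈ Submodule.span ℝ {x, y}) : fresnelPoly G ξ = 0 := by
  obtain ⟨s, r, rfl⟩ := Submodule.mem_span_pair.mp hξ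
  by_cases hsr : s * s + r * r = 0
  · obtain ⟨rfl, rfl⟩ := mul_self_add_mul_self_eq_zero.mp hsr
    simp [fresnelPoly]
  have hwedge : wedge (s • x + r • y) (-r • x + s • y) = (s * s + r * r) • wedge x y := by
    rw [wedge_smul_add_smul]
    ring_nf
  refine fresnelPoly_eq_zero_of_vecMul (y := -r • x + s • y) (hwedge ▸ smul_ne_zero hsr hxy)
    (vecMul_petrov_inv_of_Kmat_mulVec hsymm hinv (μ := μ) ?_)
  rw [hwedge, mulVec_smul, hK, smul_comm]

end JordanChain

/-- Lemma 4.1: existence of a null plane.  If the endomorphism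
`K = ω̂_G ∘ Ĝ⁻¹` of `Λ²((ℝ⁴)*)` admits a real Jordan chain of length two, then there are
linearly independent covectors `θ¹, θ²` such that every `ξ` in their span satisfies
`𝒢(ξ,ξ,ξ,ξ) = 0`. -/
theorem exists_null_plane_of_jordan_chain
    (G : Fin 4 → Fin 4 → Fin 4 → Fin 4 → ℝ)
    (hsym : ∀ a b c d, G a b c d = G c d a b)
    (hasym : ∀ a b c d, G a b c d = - G b a c d)
    (hinv : IsUnit (petrov G).det)
    (lam : ℝ) (Ω₁ Ω₂ : Fin 6 → ℝ) (hΩ₁ : Ω₁ ≠ 0)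
    (h1 : (Kmat G).mulVec Ω₁ = lam • Ω₁)
    (h2 : (Kmat G).mulVec Ω₂ = Ω₁ + lam • Ω₂) :
    ∃ θ₁ θ₂ : Fin 4 → ℝ, LinearIndependent ℝ ![θ₁, θ₂] ∧
      ∀ ξ ∈ Submodule.span ℝ ({θ₁, θ₂} : Set (Fin 4 → ℝ)), fresnelPoly G ξ = 0 := by
  have hsymm : (petrov G).IsSymm := Matrix.IsSymm.ext fun A B ↦ hsym _ _ _ _
  have hnull := dotProduct_mulVec_self_eq_zero_of_jordanChain
    (wedgePairing_mul_Kmat_eq_transpose_mul hsymm) h1 h2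
  obtain ⟨θ₁, θ₂, rfl⟩ := exists_wedge_eq hnull
  exact ⟨θ₁, θ₂, linearIndependent_of_wedge_ne_zero hΩ₁,
    fun ξ hξ ↦ fresnelPoly_eq_zero_of_mem_span hsymm hinv hΩ₁ h1 hξ⟩

end
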